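/- Let g ≥ 1 and let C, B̂ ∈ Matrix (Fin g) (Fin g) ℂ. Suppose det C ≠ 0 and the real matrix Im B̂ of imaginary parts of the entries of B̂ is positive definite (in particular symmetric). Then det(fromBlocks C (conj C) (B̂·C) (conj(B̂·C))) ≠ 0; i.e. the period matrix ω of the holomorphic differentials and their conjugates is invertible as long as the imaginary part of the matrix of B-periods of the normalized holomorphic differentials is positive definite. -/

import Mathlib

/-!
Subtracting `B̂` times the first block row from the second one makes the matrix block upper
triangular with diagonal blocks `C` and `(conj B̂ - B̂) * conj C`. Since
`conj B̂ - B̂ = -2i Im B̂`, the determinant is `(-2i)^g * |det C|^2 * det (Im B̂)`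
(`period_matrix_det`), and the determinant of a positive definite matrix is positive.
-/

open Matrix

theorem conj_sub_self_eq_smul_im {n : Type*} (B : Matrix n n ℂ) :
    B.map (starRingEnd ℂ) - B
      = (-2 * Complex.I) • (Matrix.of fun i j => (B i j).im).map Complex.ofRealHom := by
  ext i j
  apply Complex.ext
  · simp
  · simp
    ring

theorem period_matrix_det {n : Type*} [Fintype n] [DecidableEq n] (C B : Matrix n n ℂ) :
    (Matrix.fromBlocks C (C.map (starRingEnd ℂ))
        (B * C) ((B * C).map (starRingEnd ℂ))).det
      = (-2 * Complex.I) ^ Fintype.card n * (C.det * starRingEnd ℂ C.det)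
          * ((Matrix.of fun i j => (B i j).im).det : ℝ) := by
  have hfac : Matrix.fromBlocks C (C.map (starRingEnd ℂ)) (B * C) ((B * C).map (starRingEnd ℂ))
      = Matrix.fromBlocks 1 0 B 1 * Matrix.fromBlocks C (C.map (starRingEnd ℂ)) 0
          ((B.map (starRingEnd ℂ) - B) * C.map (starRingEnd ℂ)) := by
    simp [Matrix.fromBlocks_multiply, Matrix.map_mul, sub_mul]
  have hconj : (C.map (starRingEnd ℂ)).det = starRingEnd ℂ C.det :=
    ((starRingEnd ℂ).map_det C).symm
  have him : ((Matrix.of fun i j => (B i j).im).map Complex.ofRealHom).det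
      = ((Matrix.of fun i j => (B i j).im).det : ℝ) :=
    (Complex.ofRealHom.map_det _).symm
  rw [hfac, det_mul, det_fromBlocks_zero₁₂, det_fromBlocks_zero₂₁, det_mul,
    conj_sub_self_eq_smul_im, det_smul, hconj, him, det_one]
  ring

/-- Invertibility of the period matrix: if `det C ≠ 0` and the imaginary part
of the matrix `B̂` of `B`-periods of the normalized holomorphic differentials
is positive definite, then the matrix of `A`- and `B`-periods of the
holomorphic differentials and their conjugates is invertible. -/
theorem period_matrix_det_ne_zero
    (g : ℕ) (hg : 1 ≤ g) (C Bh : Matrix (Fin g) (Fin g) ℂ)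
    (hC : C.det ≠ 0)
    (hIm : Matrix.PosDef (fun i j : Fin g => (Bh i j).im)) :
    (Matrix.fromBlocks C (C.map (starRingEnd ℂ))
        (Bh * C) ((Bh * C).map (starRingEnd ℂ))).det ≠ 0 := by
  have hpos : (Matrix.of fun i j => (Bh i j).im).det ≠ 0 := hIm.det_pos.ne'
  rw [period_matrix_det]
  refine mul_ne_zero (mul_ne_zero (pow_ne_zero _ (by simp)) (mul_ne_zero hC ?_)) ?_
  · simpa using hC
  · exact_mod_cast hpos
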